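/- arXiv:2003.03513 — 6 statements merged into one kernel-verified Lean document; each statement's English description precedes it below -/
import Mathlib

section
/- Let K be a field and V a K-vector space of dimension 3. Let N ≥ 2 and q ≥ 2N+2 be integers with q even, and let a_1, …, a_q be nonzero vectors in V such that for every subset R ⊆ {1,…,q} with |R| = N+1, the span of {a_j : j ∈ R} has dimension exactly 2. Then there exists a partition of {1,…,q} into q/2 two-element sets I_1, …, I_{q/2} such that the span of {a_i : i ∈ I_j} has dimension 2 for every j = 1, …, q/2. -/
/-!
Call two indices equivalent when their (nonzero) vectors span the same line. A class with more
than `N` elements would contain `N + 1` vectors spanning only a line, against the rank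
hypothesis, so every class has at most `N < q / 2` elements. List the indices so that each class
is a block of consecutive positions, and pair position `j` with position `j + q / 2`
(`exists_perm_shift_ne`): two equivalent positions at distance `q / 2` would force a class with
more than `q / 2` elements. Nonzero vectors on different lines span a plane
(`finrank_span_pair_eq_two`).
-/

/-- If no `m + 1` indices carry the same value of `s`, then after sorting the indices by value,
positions at distance at least `m` carry different values. -/
theorem exists_perm_shift_ne {α : Type*} {q m : ℕ} (s : Fin q → α)
    (hs : ∀ R : Finset (Fin q), R.card = m + 1 → ∀ x, ∃ i ∈ R, s i ≠ x) :
    ∃ σ : Equiv.Perm (Fin q), ∀ i j : Fin q, (i : ℕ) + m ≤ j → s (σ i) ≠ s (σ j) := by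
  classical
  -- `α` carries no order; number the values of `s` arbitrarily.
  obtain ⟨n, ⟨e⟩⟩ := Finite.exists_equiv_fin (Set.range s)
  let f : Fin q → Fin n := fun i => e ⟨s i, i, rfl⟩
  have hf : ∀ i j, f i = f j → s i = s j := fun i j h =>
    congrArg Subtype.val (e.injective h)
  have hmono : Monotone (f ∘ Tuple.sort f) := Tuple.monotone_sort f
  refine ⟨Tuple.sort f, fun i j hij h => ?_⟩
  have hcard : m + 1 ≤ ((Finset.Icc i j).map (Tuple.sort f).toEmbedding).card := by
    rw [Finset.card_map, Fin.card_Icc]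
    omega
  obtain ⟨R, hR, hRc⟩ := Finset.exists_subset_card_eq hcard
  obtain ⟨k, hk, hne⟩ := hs R hRc (s (Tuple.sort f i))
  obtain ⟨l, hl, rfl⟩ := Finset.mem_map.1 (hR hk)
  rw [Finset.mem_Icc] at hl
  have hfe : f (Tuple.sort f i) = f (Tuple.sort f j) := by simp only [f, h]
  refine hne (hf _ _ (le_antisymm ?_ (hmono hl.1)))
  exact (hmono hl.2).trans hfe.ge

theorem finrank_span_pair_eq_two {K V : Type*} [Field K] [AddCommGroup V] [Module K V]
    {x y : V} (hx : x ≠ 0) (hy : y ≠ 0)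
    (h : Submodule.span K {x} ≠ Submodule.span K {y}) :
    Module.finrank K (Submodule.span K {x, y}) = 2 := by
  have hli : LinearIndependent K ![x, y] := by
    rw [LinearIndependent.pair_iff' hx]
    rintro c rfl
    have hc : c ≠ 0 := fun hc => hy (by simp [hc])
    exact h (Submodule.span_singleton_smul_eq (IsUnit.mk0 c hc) x).symm
  have := finrank_span_eq_card hli
  rwa [Matrix.range_cons_cons_empty, Fintype.card_fin] at this

/-- Lemma 3.2 of the paper (Lemma 12 of [NT]): a family of q nonzero vectors in a
3-dimensional vector space, any N+1 of which span a 2-dimensional subspace, can be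
partitioned into q/2 pairs each spanning a 2-dimensional subspace. -/
theorem stmt_0 (K : Type*) [Field K] (V : Type*) [AddCommGroup V] [Module K V]
    (hV : Module.finrank K V = 3)
    (N q : ℕ) (hN : 2 ≤ N) (hq : 2 * N + 2 ≤ q) (hqeven : Even q)
    (a : Fin q → V) (ha : ∀ i, a i ≠ 0)
    (hrank : ∀ R : Finset (Fin q), R.card = N + 1 →
      Module.finrank K (Submodule.span K (a '' (R : Set (Fin q)))) = 2) :
    ∃ I : Fin (q / 2) → Finset (Fin q),
      (∀ j, (I j).card = 2) ∧
      Pairwise (Function.onFun Disjoint I) ∧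
      Finset.univ.biUnion I = Finset.univ ∧
      (∀ j, Module.finrank K (Submodule.span K (a '' (I j : Set (Fin q)))) = 2) := by
  classical
  obtain ⟨m, rfl⟩ := hqeven
  have hhalf : (m + m) / 2 = m := by omega
  obtain ⟨σ, hσ⟩ := exists_perm_shift_ne (m := m) (fun i => Submodule.span K {a i}) (by
    intro R hR x
    by_contra! hall
    obtain ⟨R', hR', hcard⟩ := Finset.exists_subset_card_eq (show N + 1 ≤ R.card by omega)
    obtain ⟨i, hi⟩ : R'.Nonempty := Finset.card_pos.1 (by omega)
    have hle : Submodule.span K (a '' (R' : Set (Fin (m + m)))) ≤ Submodule.span K {a i} := by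
      rw [Submodule.span_le]
      rintro _ ⟨k, hk, rfl⟩
      have hki : Submodule.span K {a k} = Submodule.span K {a i} :=
        (hall k (hR' hk)).trans (hall i (hR' hi)).symm
      exact hki ▸ Submodule.mem_span_singleton_self (a k)
    have h2 := Submodule.finrank_mono hle
    rw [hrank R' hcard, finrank_span_singleton (ha i)] at h2
    omega)
  let lo : Fin ((m + m) / 2) → Fin (m + m) := fun j => ⟨j, by omega⟩
  let hi : Fin ((m + m) / 2) → Fin (m + m) := fun j => ⟨j + m, by omega⟩
  have hne : ∀ j, Submodule.span K {a (σ (lo j))} ≠ Submodule.span K {a (σ (hi j))} :=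
    fun j => hσ (lo j) (hi j) le_rfl
  refine ⟨fun j => {σ (lo j), σ (hi j)}, fun j => ?_, fun j k hjk => ?_, ?_, fun j => ?_⟩
  · exact Finset.card_pair fun h => hne j (by rw [h])
  · have hjk' : (j : ℕ) ≠ k := fun h => hjk (Fin.ext h)
    have hj := j.2
    have hk := k.2
    simp only [Function.onFun, Finset.disjoint_left, Finset.mem_insert, Finset.mem_singleton]
    rintro x (rfl | rfl) (h | h) <;>
      · have := congrArg Fin.val (σ.injective h)
        simp only [lo, hi] at this
        omega
  · rw [Finset.eq_univ_iff_forall]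
    intro x
    obtain ⟨p, rfl⟩ := σ.surjective x
    simp only [Finset.mem_biUnion, Finset.mem_univ, true_and, Finset.mem_insert,
      Finset.mem_singleton, EmbeddingLike.apply_eq_iff_eq]
    by_cases hp : (p : ℕ) < m
    · exact ⟨⟨p, by omega⟩, Or.inl rfl⟩
    · refine ⟨⟨p - m, by omega⟩, Or.inr (Fin.ext ?_)⟩
      simp only [hi]
      omega
  · rw [Finset.coe_pair, Set.image_pair]
    exact finrank_span_pair_eq_two (ha _) (ha _) (hne j)
end

section
/- Let K be a field and W a K-vector space of dimension 3. Let N ≥ 2 and k ≥ 0 be integers and set q = 2N+2+2k. Let V_1, …, V_q be vectors in W such that for every subset R ⊆ {1,…,q} with |R| = N+1, the span of {V_v : v ∈ R} has dimension 3. Assume there exists a partition of {1,…,q} into N+1+k two-element sets J_1, …, J_{N+1+k} such that the span of {V_v : v ∈ J_j} has dimension 2 for all j. Then for every subset S = {j_1, …, j_{k+2}} ⊆ {1,…,q} of cardinality k+2 there exist a partition of {1,…,q} into N+1+k two-element sets J'_1, …, J'_{N+1+k} with the span of {V_v : v ∈ J'_j} of dimension 2 for all j, together with pairwise distinct indices r_1,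 …, r_{k+2} ∈ {1,…,N+1+k}, such that for every 1 ≤ i ≤ k+2 the span of {V_v : v ∈ J'_{r_i}} ∪ {V_{j_i}} has dimension 3. -/
/-!
Read the vectors as points of a projective plane. They are nonzero, and the rank hypothesis says
that every line carries at most `N` of them (`card_mem_plane_le`). For a partition into pairs
spanning lines, put `avoid J u` for the set of pairs whose line misses the point `u`. The required
indices `r` are a system of distinct representatives of the sets `avoid J (s i)`, so Hall's theorem
applies. For a set of indices containing two different projective points Hall's inequality is
automatic: the pairs whose line meets both points lie on a single line, so there are at most `N / 2`
of them (`two_mul_card_through_le`). Hence it suffices that no point `u` is deficient, i.e. that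
`avoid J u` has at least as many elements as there are `i` with `s i` on the point `u`
(`hall_of_not_deficient`).

If `u` is deficient, counting gives two pairs `{x, y}`, `{z, w}` on distinct lines through `u`, with
no element at the point `u`. Exchanging `y` and `z` adds exactly these two pairs to `avoid J u`
(`exists_pairing_swap`). Iterate until `u` is no longer deficient. Since `avoid J u` is then still small,
another deficient point `u'` would force at least `N - 1` pairs on the line `u u'`, hence `N ≤ 2`,
while the existence of a pair on a line through `u` but away from `u` forces `N ≥ 3`
(`exists_not_deficient`).
-/

section Plane

variable {K W : Type*} [Field K] [AddCommGroup W] [Module K W]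

theorem finrank_span_pair_eq_two_iff (a b : W) :
    Module.finrank K (Submodule.span K {a, b}) = 2 ↔ a ≠ 0 ∧ b ∉ Submodule.span K {a} := by
  have hrange : Set.range ![a, b] = {a, b} := by simp [Matrix.range_cons, Set.pair_comm]
  have h1 : LinearIndependent K ![a, b] ↔ Module.finrank K (Submodule.span K {a, b}) = 2 := by
    rw [linearIndependent_iff_card_eq_finrank_span, hrange]
    simp [Set.finrank, eq_comm]
  rw [← h1]
  by_cases ha : a = 0
  · subst ha
    simp only [ne_eq, not_true_eq_false, false_and, iff_false]
    intro h
    exact h.ne_zero 0 rfl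
  · rw [LinearIndependent.pair_iff' ha]
    simp [Submodule.mem_span_singleton, ha]

theorem mem_span_singleton_symm {a b : W} (hb : b ≠ 0) (h : b ∈ Submodule.span K {a}) :
    a ∈ Submodule.span K {b} := by
  have := mem_span_insert_exchange (K := K) (s := (∅ : Set W)) (x := b) (y := a)
    (by simpa using h) (by simpa using hb)
  simpa using this

/-- If `P` and `Q` are different planes through `p`, then `x ∈ P` and `z ∈ Q` off the line of `p` span
a plane not containing `p`. -/
theorem transverse_of_ne {p x z : W} {P Q : Submodule K W} (hp : p ≠ 0)
    (hP : Module.finrank K P = 2) (hQ : Module.finrank K Q = 2) (hPQ : P ≠ Q)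
    (hpP : p ∈ P) (hpQ : p ∈ Q) (hxP : x ∈ P) (hzQ : z ∈ Q)
    (hx : x ∉ Submodule.span K {p}) (hz : z ∉ Submodule.span K {p}) :
    Module.finrank K (Submodule.span K {x, z}) = 2 ∧ p ∉ Submodule.span K {x, z} := by
  have : FiniteDimensional K P := Module.finite_of_finrank_pos (by omega)
  have : FiniteDimensional K Q := Module.finite_of_finrank_pos (by omega)
  have eP : Submodule.span K {p, x} = P :=
    Submodule.eq_of_le_of_finrank_eq (Submodule.span_le.2 (by
      rintro v (rfl | rfl) <;> assumption))
      (by rw [hP, finrank_span_pair_eq_two_iff]; exact ⟨hp, hx⟩)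
  have eQ : Submodule.span K {p, z} = Q :=
    Submodule.eq_of_le_of_finrank_eq (Submodule.span_le.2 (by
      rintro v (rfl | rfl) <;> assumption))
      (by rw [hQ, finrank_span_pair_eq_two_iff]; exact ⟨hp, hz⟩)
  have hzP : z ∉ P := by
    intro h
    apply hPQ
    symm
    refine Submodule.eq_of_le_of_finrank_eq ?_ (by rw [hP, hQ])
    rw [← eQ, Submodule.span_le]
    rintro v (rfl | rfl) <;> assumption
  have hx0 : x ≠ 0 := by rintro rfl; exact hx (Submodule.zero_mem _)
  constructor
  · rw [finrank_span_pair_eq_two_iff]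
    refine ⟨hx0, fun h => hzP ?_⟩
    exact (Submodule.span_singleton_le_iff_mem x P).2 hxP h
  · intro h
    apply hzP
    rw [← eP]
    apply mem_span_insert_exchange
    · rwa [Set.pair_comm] at h
    · exact fun h => hx (mem_span_singleton_symm hp h)

end Plane

section Pairing

open Finset Classical

variable {K W : Type*} [Field K] [AddCommGroup W] [Module K W] {q n : ℕ}

/-- `J` is a partition of the indices into pairs, each pair spanning a plane. -/
structure IsPairing (K : Type*) {W : Type*} [Field K] [AddCommGroup W] [Module K W] {q n : ℕ}
    (V : Fin q → W) (J : Fin n → Finset (Fin q)) : Prop where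
  card : ∀ j, (J j).card = 2
  disj : Pairwise (Function.onFun Disjoint J)
  union : Finset.univ.biUnion J = Finset.univ
  rank : ∀ j, Module.finrank K (Submodule.span K (V '' (J j : Set (Fin q)))) = 2

/-- The pairs whose plane does not contain `V u`. -/
noncomputable def avoid (K : Type*) {W : Type*} [Field K] [AddCommGroup W] [Module K W] {q n : ℕ}
    (V : Fin q → W) (J : Fin n → Finset (Fin q)) (u : Fin q) : Finset (Fin n) :=
  univ.filter fun j => V u ∉ Submodule.span K (V '' (J j : Set (Fin q)))

/-- The positions `i` at which `V (s i)` is proportional to `V u`. -/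
noncomputable def atPoint (K : Type*) {W : Type*} [Field K] [AddCommGroup W] [Module K W] {q l : ℕ}
    (V : Fin q → W) (s : Fin l → Fin q) (u : Fin q) : Finset (Fin l) :=
  univ.filter fun i => V (s i) ∈ Submodule.span K {V u}

variable {V : Fin q → W} {J : Fin n → Finset (Fin q)} {N : ℕ}

theorem card_mem_plane_le
    (hrank : ∀ R : Finset (Fin q), R.card = N + 1 →
      Module.finrank K (Submodule.span K (V '' (R : Set (Fin q)))) = 3)
    (P : Submodule K W) (hP : Module.finrank K P = 2) :
    (univ.filter fun v => V v ∈ P).card ≤ N := by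
  by_contra! h
  obtain ⟨R, hR, hc⟩ := exists_subset_card_eq (Nat.succ_le_of_lt h)
  have h3 := hrank R hc
  have : FiniteDimensional K P := Module.finite_of_finrank_pos (by omega)
  have hle : Submodule.span K (V '' (R : Set (Fin q))) ≤ P := by
    rw [Submodule.span_le]
    rintro _ ⟨v, hv, rfl⟩
    exact (mem_filter.1 (hR hv)).2
  have := Submodule.finrank_mono hle
  omega

theorem IsPairing.exists_mem (hJ : IsPairing K V J) (v : Fin q) : ∃ j, v ∈ J j := by
  have : v ∈ univ.biUnion J := by rw [hJ.union]; exact mem_univ v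
  simpa using this

/-- The pair containing `x`, written with `x` first. -/
theorem IsPairing.eq_pair (hJ : IsPairing K V J) {x : Fin q} {j : Fin n} (hx : x ∈ J j) :
    ∃ y, y ≠ x ∧ J j = {x, y} ∧ V x ≠ 0 ∧ V y ∉ Submodule.span K {V x} := by
  obtain ⟨a, b, hab, h⟩ := card_eq_two.1 (hJ.card j)
  have key : ∃ y, y ≠ x ∧ J j = {x, y} := by
    rw [h, mem_insert, mem_singleton] at hx
    rcases hx with rfl | rfl
    · exact ⟨b, hab.symm, h⟩
    · exact ⟨a, hab, by rw [h, Finset.pair_comm]⟩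
  obtain ⟨y, hy, e⟩ := key
  have hr := hJ.rank j
  rw [e, coe_pair, Set.image_pair, finrank_span_pair_eq_two_iff] at hr
  exact ⟨y, hy, e, hr⟩

theorem IsPairing.ne_zero (hJ : IsPairing K V J) (v : Fin q) : V v ≠ 0 := by
  obtain ⟨j, hj⟩ := hJ.exists_mem v
  obtain ⟨y, -, -, h, -⟩ := hJ.eq_pair hj
  exact h

theorem mem_span_pair {v : Fin q} {j : Fin n} (h : v ∈ J j) :
    V v ∈ Submodule.span K (V '' (J j : Set (Fin q))) :=
  Submodule.subset_span ⟨v, h, rfl⟩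

theorem IsPairing.card_biUnion (hJ : IsPairing K V J) (T : Finset (Fin n)) :
    (T.biUnion J).card = 2 * T.card := by
  rw [Finset.card_biUnion (fun i _ j _ hij => hJ.disj hij), sum_congr rfl (fun j _ => hJ.card j)]
  simp [mul_comm]

/-- At most `N / 2` of the `n` pairs have a plane containing two given non-proportional vectors, so
all the others avoid one of the two. -/
theorem two_mul_card_through_le (hJ : IsPairing K V J)
    (hcap : ∀ P : Submodule K W, Module.finrank K P = 2 →
      (univ.filter fun v => V v ∈ P).card ≤ N)
    {u u' : Fin q} (huu : V u' ∉ Submodule.span K {V u}) :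
    2 * n ≤ N + 2 * (avoid K V J u ∪ avoid K V J u').card := by
  have hP := (finrank_span_pair_eq_two_iff (K := K) (V u) (V u')).2 ⟨hJ.ne_zero u, huu⟩
  have h1 := hcap _ hP
  have h2 : (((avoid K V J u ∪ avoid K V J u')ᶜ).biUnion J).card ≤ N := by
    refine (card_le_card ?_).trans h1
    intro v hv
    obtain ⟨j, hj, hvj⟩ := mem_biUnion.1 hv
    simp only [avoid, mem_compl, mem_union, mem_filter, mem_univ, true_and, not_or,
      not_not] at hj
    have : FiniteDimensional K (Submodule.span K (V '' (J j : Set (Fin q)))) :=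
      Module.finite_of_finrank_pos (by rw [hJ.rank j]; omega)
    have e : Submodule.span K {V u, V u'} = Submodule.span K (V '' (J j : Set (Fin q))) := by
      refine Submodule.eq_of_le_of_finrank_eq (Submodule.span_le.2 ?_) (by rw [hP, hJ.rank j])
      rintro w (rfl | rfl)
      exacts [hj.1, hj.2]
    rw [mem_filter, e]
    exact ⟨mem_univ _, mem_span_pair hvj⟩
  rw [hJ.card_biUnion, card_compl, Fintype.card_fin] at h2
  omega

theorem hall_of_not_deficient {k : ℕ} {J : Fin (N + 1 + k) → Finset (Fin q)} (hN : 2 ≤ N)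
    (hJ : IsPairing K V J)
    (hcap : ∀ P : Submodule K W, Module.finrank K P = 2 →
      (univ.filter fun v => V v ∈ P).card ≤ N)
    (s : Fin (k + 2) → Fin q)
    (h : ∀ u, (atPoint K V s u).card ≤ (avoid K V J u).card) (A : Finset (Fin (k + 2))) :
    A.card ≤ (A.biUnion fun i => avoid K V J (s i)).card := by
  rcases A.eq_empty_or_nonempty with rfl | ⟨i₀, hi₀⟩
  · simp
  by_cases hA : A ⊆ atPoint K V s (s i₀)
  · exact (card_le_card hA).trans ((h _).trans
      (card_le_card (subset_biUnion_of_mem (fun i => avoid K V J (s i)) hi₀)))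
  · obtain ⟨i₁, hi₁, hn⟩ := not_subset.1 hA
    have hn : V (s i₁) ∉ Submodule.span K {V (s i₀)} := by simpa [atPoint] using hn
    have h1 := two_mul_card_through_le hJ hcap hn
    have h2 := card_le_card (union_subset
      (subset_biUnion_of_mem (fun i => avoid K V J (s i)) hi₀)
      (subset_biUnion_of_mem (fun i => avoid K V J (s i)) hi₁))
    have h3 : A.card ≤ k + 2 := by simpa using card_le_univ A
    omega

/-- If few pairs avoid `u`, exchanging elements of two suitable pairs makes exactly two more
pairs avoid `u`. -/
theorem exists_pairing_swap {k : ℕ} {J : Fin (N + 1 + k) → Finset (Fin q)}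
    (hJ : IsPairing K V J)
    (hcap : ∀ P : Submodule K W, Module.finrank K P = 2 →
      (univ.filter fun v => V v ∈ P).card ≤ N)
    (u : Fin q) (hu : (avoid K V J u).card ≤ k + 1) :
    3 ≤ N ∧ ∃ J₁ : Fin (N + 1 + k) → Finset (Fin q), IsPairing K V J₁ ∧
      (avoid K V J₁ u).card = (avoid K V J u).card + 2 := by
  set M : Finset (Fin q) := univ.filter fun v => V v ∈ Submodule.span K {V u} with hM
  have memM : ∀ v, v ∈ M ↔ V v ∈ Submodule.span K {V u} := fun v => by simp [hM]
  have M_sub : ∀ j, j ∉ avoid K V J u →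
      ∀ v ∈ M, V v ∈ Submodule.span K (V '' (J j : Set (Fin q))) := by
    intro j hj v hv
    simp only [avoid, mem_filter, mem_univ, true_and, not_not] at hj
    exact (Submodule.span_singleton_le_iff_mem _ _).2 hj ((memM v).1 hv)
  -- The partner of `u` lies on a plane with `M` but not in `M`.
  have hMcard : M.card + 1 ≤ N := by
    obtain ⟨j, hj⟩ := hJ.exists_mem u
    obtain ⟨x, -, e, -, hx⟩ := hJ.eq_pair hj
    have hxM : x ∉ M := fun h => hx ((memM x).1 h)
    rw [← card_insert_of_notMem hxM]
    refine (card_le_card ?_).trans (hcap _ (hJ.rank j))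
    intro v hv
    rw [mem_filter]
    refine ⟨mem_univ _, ?_⟩
    rcases mem_insert.1 hv with rfl | hv
    · exact mem_span_pair (by simp [e])
    · refine M_sub j ?_ v hv
      simp only [avoid, mem_filter, mem_univ, true_and, not_not]
      exact mem_span_pair hj
  -- The pairs whose plane contains `V u` while neither member is proportional to `V u`.
  set R : Finset (Fin (N + 1 + k)) :=
    univ.filter fun j => j ∉ avoid K V J u ∧ Disjoint (J j) M with hR
  have hRcard : N ≤ R.card + M.card := by
    choose f hf using hJ.exists_mem
    have hsub : (univ : Finset (Fin (N + 1 + k))) ⊆ avoid K V J u ∪ (M.image f ∪ R) := by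
      intro j _
      by_cases h1 : j ∈ avoid K V J u
      · exact mem_union_left _ h1
      refine mem_union_right _ ?_
      by_cases h2 : Disjoint (J j) M
      · exact mem_union_right _ (by simp [hR, h1, h2])
      · obtain ⟨v, hv, hvM⟩ := not_disjoint_iff.1 h2
        refine mem_union_left _ (mem_image.2 ⟨v, hvM, ?_⟩)
        by_contra hne
        exact disjoint_left.1 (hJ.disj hne) (hf v) hv
    have h1 := card_le_card hsub
    have h2 := card_union_le (avoid K V J u) (M.image f ∪ R)
    have h3 := card_union_le (M.image f) R
    have h4 : (M.image f).card ≤ M.card := card_image_le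
    rw [card_univ, Fintype.card_fin] at h1
    omega
  have huM : u ∈ M := (memM u).2 (Submodule.mem_span_singleton_self _)
  have hMpos : 0 < M.card := card_pos.2 ⟨u, huM⟩
  obtain ⟨j₁, hj₁⟩ : R.Nonempty := card_pos.1 (by omega)
  have hRmem : ∀ j ∈ R, V u ∈ Submodule.span K (V '' (J j : Set (Fin q))) ∧ Disjoint (J j) M := by
    intro j hj
    simpa [hR, avoid] using hj
  -- A plane through `V u` contains `M` together with all the pairs of `R` lying on it.
  have hplane : ∀ T ⊆ R, (∀ j ∈ T, Submodule.span K (V '' (J j : Set (Fin q))) =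
      Submodule.span K (V '' (J j₁ : Set (Fin q)))) → M.card + 2 * T.card ≤ N := by
    intro T hT hall
    rw [← hJ.card_biUnion, ← card_union_of_disjoint]
    · refine (card_le_card ?_).trans (hcap _ (hJ.rank j₁))
      intro v hv
      rw [mem_filter]
      refine ⟨mem_univ _, ?_⟩
      rcases mem_union.1 hv with hv | hv
      · exact (Submodule.span_singleton_le_iff_mem _ _).2 (hRmem j₁ hj₁).1 ((memM v).1 hv)
      · obtain ⟨j, hj, hvj⟩ := mem_biUnion.1 hv
        rw [← hall j hj]
        exact mem_span_pair hvj
    · rw [disjoint_biUnion_right]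
      exact fun j hj => (hRmem j (hT hj)).2.symm
  have hN3 : 3 ≤ N := by
    have := hplane {j₁} (by simpa using hj₁) (by simp)
    rw [card_singleton] at this
    omega
  refine ⟨hN3, ?_⟩
  obtain ⟨j₂, hj₂, hne⟩ : ∃ j₂ ∈ R, Submodule.span K (V '' (J j₂ : Set (Fin q))) ≠
      Submodule.span K (V '' (J j₁ : Set (Fin q))) := by
    by_contra! hall
    have := hplane R subset_rfl hall
    omega
  have hj12 : j₁ ≠ j₂ := by rintro rfl; exact hne rfl
  obtain ⟨x, hx⟩ : (J j₁).Nonempty := card_pos.1 (by rw [hJ.card]; omega)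
  obtain ⟨z, hz⟩ : (J j₂).Nonempty := card_pos.1 (by rw [hJ.card]; omega)
  obtain ⟨y, hyx, e₁, -, -⟩ := hJ.eq_pair hx
  obtain ⟨w, hwz, e₂, -, -⟩ := hJ.eq_pair hz
  have hy : y ∈ J j₁ := by simp [e₁]
  have hw : w ∈ J j₂ := by simp [e₂]
  have hd := hJ.disj hj12
  have hd' : ∀ a ∈ J j₁, ∀ b ∈ J j₂, a ≠ b := fun a ha b hb hab =>
    disjoint_left.1 hd ha (hab ▸ hb)
  obtain ⟨hu1, hM1⟩ := hRmem j₁ hj₁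
  obtain ⟨hu2, hM2⟩ := hRmem j₂ hj₂
  have tr : ∀ a ∈ J j₁, ∀ b ∈ J j₂, Module.finrank K (Submodule.span K {V a, V b}) = 2 ∧
      V u ∉ Submodule.span K {V a, V b} := fun a ha b hb =>
    transverse_of_ne (hJ.ne_zero u) (hJ.rank j₁) (hJ.rank j₂) hne.symm hu1 hu2
      (mem_span_pair ha) (mem_span_pair hb)
      (fun h => disjoint_left.1 hM1 ha ((memM a).2 h))
      (fun h => disjoint_left.1 hM2 hb ((memM b).2 h))
  -- Relabelling all pairs by the transposition `(y z)` keeps them a partition.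
  set σ : Equiv.Perm (Fin q) := Equiv.swap y z with hσ
  have s1 : (J j₁).map σ.toEmbedding = {x, z} := by
    rw [e₁, map_insert, map_singleton]
    simp only [Equiv.coe_toEmbedding, hσ, Equiv.swap_apply_left]
    rw [Equiv.swap_apply_of_ne_of_ne hyx.symm (hd' x hx z hz)]
  have s2 : (J j₂).map σ.toEmbedding = {y, w} := by
    rw [e₂, map_insert, map_singleton]
    simp only [Equiv.coe_toEmbedding, hσ, Equiv.swap_apply_right]
    rw [Equiv.swap_apply_of_ne_of_ne (hd' y hy w hw).symm hwz]
  have s3 : ∀ j, j ≠ j₁ → j ≠ j₂ → (J j).map σ.toEmbedding = J j := by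
    intro j h1 h2
    have hfix : ∀ a ∈ J j, σ a = a := fun a ha =>
      Equiv.swap_apply_of_ne_of_ne
        (by rintro rfl; exact disjoint_left.1 (hJ.disj h1) ha hy)
        (by rintro rfl; exact disjoint_left.1 (hJ.disj h2) ha hz)
    apply eq_of_subset_of_card_le
    · intro b hb
      obtain ⟨a, ha, rfl⟩ := mem_map.1 hb
      simpa [hfix a ha] using ha
    · rw [card_map]
  refine ⟨fun j => (J j).map σ.toEmbedding, ⟨fun j => by rw [card_map, hJ.card], ?_, ?_, ?_⟩, ?_⟩
  · intro i j hij
    exact (disjoint_map _).2 (hJ.disj hij)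
  · ext v
    obtain ⟨j, hj⟩ := hJ.exists_mem (σ.symm v)
    simp only [mem_biUnion, mem_univ, true_and, iff_true]
    exact ⟨j, mem_map.2 ⟨_, hj, by simp⟩⟩
  · intro j
    by_cases h1 : j = j₁
    · subst h1
      rw [s1, coe_pair, Set.image_pair]
      exact (tr x hx z hz).1
    by_cases h2 : j = j₂
    · subst h2
      rw [s2, coe_pair, Set.image_pair]
      exact (tr y hy w hw).1
    · rw [s3 j h1 h2]
      exact hJ.rank j
  · have hn1 : j₁ ∉ insert j₂ (avoid K V J u) := by
      simp [hj12, avoid, hu1]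
    have hn2 : j₂ ∉ avoid K V J u := by
      simp [avoid, hu2]
    have : avoid K V (fun j => (J j).map σ.toEmbedding) u =
        insert j₁ (insert j₂ (avoid K V J u)) := by
      ext j
      rw [mem_insert, mem_insert]
      simp only [avoid, mem_filter, mem_univ, true_and]
      by_cases h1 : j = j₁
      · subst h1
        simp only [s1, coe_pair, Set.image_pair, true_or, iff_true]
        exact (tr x hx z hz).2
      by_cases h2 : j = j₂
      · subst h2
        simp only [s2, coe_pair, Set.image_pair, true_or, or_true, iff_true]
        exact (tr y hy w hw).2
      · simp only [s3 j h1 h2, h1, h2, false_or]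
    rw [this, card_insert_of_notMem hn1, card_insert_of_notMem hn2]

theorem avoid_eq_of_parallel (hJ : IsPairing K V J) {u u' : Fin q}
    (h : V u' ∈ Submodule.span K {V u}) : avoid K V J u' = avoid K V J u := by
  have h' := mem_span_singleton_symm (hJ.ne_zero u') h
  ext j
  simp only [avoid, mem_filter, mem_univ, true_and]
  exact not_congr ⟨fun hj => (Submodule.span_singleton_le_iff_mem _ _).2 hj h',
    fun hj => (Submodule.span_singleton_le_iff_mem _ _).2 hj h⟩

/-- Starting from a deficient point `u`, swaps lead to a pairing without deficient points.
The induction is on the number `d` bounding how many pairs avoiding `u` are still missing. -/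
theorem exists_not_deficient {k : ℕ}
    (hcap : ∀ P : Submodule K W, Module.finrank K P = 2 →
      (univ.filter fun v => V v ∈ P).card ≤ N)
    (s : Fin (k + 2) → Fin q) (u : Fin q) (d : ℕ) :
    ∀ J : Fin (N + 1 + k) → Finset (Fin q), IsPairing K V J →
      (avoid K V J u).card < (atPoint K V s u).card →
      (atPoint K V s u).card ≤ (avoid K V J u).card + d →
      ∃ J' : Fin (N + 1 + k) → Finset (Fin q), IsPairing K V J' ∧
        ∀ v, (atPoint K V s v).card ≤ (avoid K V J' v).card := by
  induction d with
  | zero => intro J _ h1 h2; omega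
  | succ d ih =>
    intro J hJ h1 h2
    have ha : (atPoint K V s u).card ≤ k + 2 := by simpa using card_le_univ (atPoint K V s u)
    obtain ⟨hN3, J₁, hJ₁, hc⟩ := exists_pairing_swap hJ hcap u (by omega)
    by_cases hlt : (avoid K V J₁ u).card < (atPoint K V s u).card
    · exact ih J₁ hJ₁ hlt (by omega)
    refine ⟨J₁, hJ₁, fun v => ?_⟩
    by_cases hv : V v ∈ Submodule.span K {V u}
    · rw [avoid_eq_of_parallel hJ₁ hv]
      refine le_trans (card_le_card ?_) (not_lt.1 hlt)
      intro i hi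
      simp only [atPoint, mem_filter, mem_univ, true_and] at hi ⊢
      exact (Submodule.span_singleton_le_iff_mem _ _).2 hv hi
    · have hdisj : Disjoint (atPoint K V s u) (atPoint K V s v) := by
        rw [disjoint_left]
        intro i hi hi'
        simp only [atPoint, mem_filter, mem_univ, true_and] at hi hi'
        exact hv ((Submodule.span_singleton_le_iff_mem _ _).2 hi
          (mem_span_singleton_symm (hJ.ne_zero _) hi'))
      have hsum : (atPoint K V s u).card + (atPoint K V s v).card ≤ k + 2 := by
        rw [← card_union_of_disjoint hdisj]
        simpa using card_le_univ (atPoint K V s u ∪ atPoint K V s v)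
      have hthrough := two_mul_card_through_le hJ₁ hcap hv
      have hun := card_union_le (avoid K V J₁ u) (avoid K V J₁ v)
      omega

end Pairing

/-- The Claim in the proof of Lemma 3.3 of the paper: given q = 2N+2+2k vectors in a
3-dimensional space, any N+1 of which span the whole space, and a partition into pairs
each spanning a 2-dimensional subspace, then for every subset S of cardinality k+2 there
is a new such partition together with k+2 distinct indices r_1,…,r_{k+2} so that the
pair J'_{r_i} together with the i-th element of S spans a 3-dimensional subspace. -/
theorem stmt_1 (K W : Type*) [Field K] [AddCommGroup W] [Module K W]
    (hW : Module.finrank K W = 3)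
    (N k : ℕ) (hN : 2 ≤ N) (q : ℕ) (hq : q = 2 * N + 2 + 2 * k)
    (V : Fin q → W)
    (hrank : ∀ R : Finset (Fin q), R.card = N + 1 →
      Module.finrank K (Submodule.span K (V '' (R : Set (Fin q)))) = 3)
    (J : Fin (N + 1 + k) → Finset (Fin q))
    (hJcard : ∀ j, (J j).card = 2)
    (hJdisj : Pairwise (Function.onFun Disjoint J))
    (hJunion : Finset.univ.biUnion J = Finset.univ)
    (hJrank : ∀ j, Module.finrank K (Submodule.span K (V '' (J j : Set (Fin q)))) = 2) :
    ∀ s : Fin (k + 2) → Fin q, Function.Injective s →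
      ∃ (J' : Fin (N + 1 + k) → Finset (Fin q)) (r : Fin (k + 2) → Fin (N + 1 + k)),
        (∀ j, (J' j).card = 2) ∧
        Pairwise (Function.onFun Disjoint J') ∧
        Finset.univ.biUnion J' = Finset.univ ∧
        (∀ j, Module.finrank K (Submodule.span K (V '' (J' j : Set (Fin q)))) = 2) ∧
        Function.Injective r ∧
        (∀ i, Module.finrank K
          (Submodule.span K (V '' (J' (r i) : Set (Fin q)) ∪ {V (s i)})) = 3) := by
  intro s _
  have hcap := card_mem_plane_le hrank
  have hJ : IsPairing K V J := ⟨hJcard, hJdisj, hJunion, hJrank⟩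
  obtain ⟨J', hJ', hdef⟩ : ∃ J' : Fin (N + 1 + k) → Finset (Fin q), IsPairing K V J' ∧
      ∀ v, (atPoint K V s v).card ≤ (avoid K V J' v).card := by
    by_cases h : ∀ v, (atPoint K V s v).card ≤ (avoid K V J v).card
    · exact ⟨J, hJ, h⟩
    · push Not at h
      obtain ⟨u, hu⟩ := h
      exact exists_not_deficient hcap s u _ J hJ hu (Nat.le_add_left _ _)
  classical
  obtain ⟨r, hr, hmem⟩ := (Finset.all_card_le_biUnion_card_iff_exists_injective
    (fun i => avoid K V J' (s i))).1 (fun A => by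
      convert hall_of_not_deficient hN hJ' hcap s hdef A)
  refine ⟨J', r, hJ'.card, hJ'.disj, hJ'.union, hJ'.rank, hr, fun i => ?_⟩
  have hi : V (s i) ∉ Submodule.span K (V '' (J' (r i) : Set (Fin q))) := by
    simpa [avoid] using hmem i
  have : FiniteDimensional K W := Module.finite_of_finrank_pos (by omega)
  have hlt : Submodule.span K (V '' (J' (r i) : Set (Fin q))) <
      Submodule.span K (V '' (J' (r i) : Set (Fin q)) ∪ {V (s i)}) :=
    lt_of_le_of_ne (Submodule.span_mono Set.subset_union_left) fun h =>
      hi (h ▸ Submodule.subset_span (Or.inr rfl))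
  have h1 := Submodule.finrank_lt_finrank_of_lt hlt
  have h2 := Submodule.finrank_le (Submodule.span K (V '' (J' (r i) : Set (Fin q)) ∪ {V (s i)}))
  rw [hJ'.rank] at h1
  omega
end

section
/- Let K be a field and W a K-vector space. Let u_1, u_2, u_3, u_4, w ∈ W satisfy: u_1, u_2 are linearly independent; u_3, u_4 are linearly independent; the span of {u_1, u_2, u_3, u_4} has dimension 3; w lies in the span of {u_1, u_2}; and each of the pairs {u_1, w} and {u_2, w} is linearly independent. Then the index set {1,2,3,4} can be partitioned into two pairs {a,b} and {c,d} such that u_a, u_b are linearly independent, u_c, u_d are linearly independent, and the three vectors u_a, u_b, w are linearly independent. -/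
/-!
Let `P` be the span of `u 0, u 1`, which contains `w`. The four vectors have rank `3` and
`P` has dimension at most `2`, so one of `u 2, u 3`, call it `x`, lies outside `P`; let `y` be the
other one. Since `p, w` is an independent pair inside `P` for both `p = u 0` and `p = u 1`, the
triple `x, p, w` is independent for either choice (`indep_triple`). The nonzero vector `y` cannot be
proportional to both of the independent vectors `u 0, u 1` (`indep_pair_or`), so `p` can be chosen
such that the remaining pair is independent as well.
-/

theorem indep_pair_or {K W : Type*} [Field K] [AddCommGroup W] [Module K W] {p q y : W}
    (h : LinearIndependent K ![p, q]) (hy : y ≠ 0) :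
    LinearIndependent K ![y, p] ∨ LinearIndependent K ![y, q] := by
  by_contra! hc
  obtain ⟨h1, h2⟩ := hc
  rw [LinearIndependent.pair_iff' hy] at h1 h2
  push Not at h1 h2
  obtain ⟨a, rfl⟩ := h1
  obtain ⟨b, rfl⟩ := h2
  have hb : a • y ≠ 0 := h.ne_zero 0
  -- `b • (a • y) = a • (b • y)` is a relation between `p = a • y` and `q = b • y`.
  have hrel := LinearIndependent.pair_iff.1 h b (-a) (by rw [neg_smul, smul_comm, add_neg_cancel])
  apply hb
  rw [neg_eq_zero.1 hrel.2, zero_smul]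

theorem indep_triple {K W : Type*} [Field K] [AddCommGroup W] [Module K W] {P : Submodule K W}
    {x p w : W} (hx : x ∉ P) (hp : p ∈ P) (hw : w ∈ P) (h : LinearIndependent K ![p, w]) :
    LinearIndependent K ![x, p] ∧ LinearIndependent K ![x, p, w] := by
  have h3 : LinearIndependent K ![x, p, w] := by
    refine linearIndependent_finCons.2 ⟨h, fun hmem => hx ?_⟩
    refine (Submodule.span_le.2 ?_ : _ ≤ P) hmem
    rintro _ ⟨i, rfl⟩
    fin_cases i
    · exact hp
    · exact hw
  refine ⟨?_, h3⟩
  have h2 := h3.comp ![(0 : Fin 3), 1] (by decide)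
  convert h2 using 1
  ext i
  fin_cases i <;> rfl

/-- The "rebuilding of two linearly independent pairs" step in the proof of the Claim
inside Lemma 3.3 of the paper. -/
theorem stmt_2 (K W : Type*) [Field K] [AddCommGroup W] [Module K W]
    (u : Fin 4 → W) (w : W)
    (h12 : LinearIndependent K ![u 0, u 1])
    (h34 : LinearIndependent K ![u 2, u 3])
    (hspan : Module.finrank K (Submodule.span K (Set.range u)) = 3)
    (hw : w ∈ Submodule.span K ({u 0, u 1} : Set W))
    (h1w : LinearIndependent K ![u 0, w])
    (h2w : LinearIndependent K ![u 1, w]) :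
    ∃ a b c d : Fin 4, ({a, b, c, d} : Finset (Fin 4)) = Finset.univ ∧
      LinearIndependent K ![u a, u b] ∧
      LinearIndependent K ![u c, u d] ∧
      LinearIndependent K ![u a, u b, w] := by
  have h0 : u 0 ∈ Submodule.span K ({u 0, u 1} : Set W) := Submodule.subset_span (by simp)
  have h1 : u 1 ∈ Submodule.span K ({u 0, u 1} : Set W) := Submodule.subset_span (by simp)
  have hout : u 2 ∉ Submodule.span K ({u 0, u 1} : Set W) ∨
      u 3 ∉ Submodule.span K ({u 0, u 1} : Set W) := by
    by_contra! hc
    have hle : Submodule.span K (Set.range u) ≤ Submodule.span K ({u 0, u 1} : Set W) := by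
      rw [Submodule.span_le]
      rintro _ ⟨i, rfl⟩
      fin_cases i
      exacts [h0, h1, hc.1, hc.2]
    have : FiniteDimensional K (Submodule.span K ({u 0, u 1} : Set W)) :=
      FiniteDimensional.span_of_finite K (Set.toFinite _)
    have hmono := Submodule.finrank_mono hle
    have hrank := finrank_range_le_card (R := K) ![u 0, u 1]
    rw [Set.finrank, Matrix.range_cons_cons_empty, Fintype.card_fin] at hrank
    omega
  rcases hout with hx | hx
  · rcases indep_pair_or h12 (h34.ne_zero 1 : u 3 ≠ 0) with hy | hy
    · obtain ⟨hp, ht⟩ := indep_triple hx h1 hw h2w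
      exact ⟨2, 1, 3, 0, by decide, hp, hy, ht⟩
    · obtain ⟨hp, ht⟩ := indep_triple hx h0 hw h1w
      exact ⟨2, 0, 3, 1, by decide, hp, hy, ht⟩
  · rcases indep_pair_or h12 (h34.ne_zero 0 : u 2 ≠ 0) with hy | hy
    · obtain ⟨hp, ht⟩ := indep_triple hx h1 hw h2w
      exact ⟨3, 1, 2, 0, by decide, hp, hy, ht⟩
    · obtain ⟨hp, ht⟩ := indep_triple hx h0 hw h1w
      exact ⟨3, 0, 2, 1, by decide, hp, hy, ht⟩
end

section
/- For every integer n ≥ 2, one has (as real numbers) min{(n+1)/(3n²+n), (5n−9)/(24n+12), (n²−1)/(10n²+8n)} < min{1/(2n), (n³+2n+3)/(n(7n²+5n+3))}. -/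
/-- Remark 2 of the paper: the quantity A of Theorem A is always strictly smaller than
the quantity B of Corollary 1.2, for every n ≥ 2. -/
theorem stmt_8 (n : ℤ) (hn : 2 ≤ n) :
    min (((n : ℝ) + 1) / (3 * n ^ 2 + n))
      (min ((5 * (n : ℝ) - 9) / (24 * n + 12)) (((n : ℝ) ^ 2 - 1) / (10 * n ^ 2 + 8 * n))) <
    min (1 / (2 * (n : ℝ))) (((n : ℝ) ^ 3 + 2 * n + 3) / (n * (7 * n ^ 2 + 5 * n + 3))) := by
  have h : (2 : ℝ) ≤ n := by exact_mod_cast hn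
  have h0 : (0 : ℝ) < n := by linarith
  refine lt_min ?_ ?_
  -- The first entry of the left-hand minimum is below `1 / (2n)`, as this amounts to `n > 1`.
  · refine (min_le_left _ _).trans_lt ?_
    rw [div_lt_div_iff₀ (by positivity) (by positivity)]
    nlinarith
  -- The third entry is below the other bound: cross-multiplying leaves
  -- `0 < 3n⁴ + 3n³ + 24n² + 51n + 27`, after removing a common factor `n`.
  · refine ((min_le_right _ _).trans (min_le_right _ _)).trans_lt ?_
    rw [div_lt_div_iff₀ (by positivity) (by positivity)]
    have key : (0 : ℝ) < n * (3 * n ^ 4 + 3 * n ^ 3 + 24 * n ^ 2 + 51 * n + 27) := by positivity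
    linarith
end

section
/- Let N ≥ 1 and k ≥ 1 be integers, let q = 2N+2+2k, and let l be the smallest integer not less than (2N−2)/(k+2)+2. Then (as real numbers) 2N+1 ≤ q(2k+1)/(k+2) ≤ l(q−2N−1); in particular l(q−2N−1) − (2N+1) ≥ 0. -/
/-- The inequality established in the proof of Lemma 3.3 of the paper, where
q = 2N+2+2k and l is the smallest integer not less than (2N−2)/(k+2)+2. -/
theorem stmt_13 (N k q l : ℤ) (hN : 1 ≤ N) (hk : 1 ≤ k)
    (hq : q = 2 * N + 2 + 2 * k)
    (hl : l = ⌈(2 * (N : ℝ) - 2) / ((k : ℝ) + 2) + 2⌉) :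
    (2 * (N : ℝ) + 1) ≤ (q : ℝ) * (2 * k + 1) / (k + 2) ∧
    (q : ℝ) * (2 * k + 1) / (k + 2) ≤ (l : ℝ) * (q - 2 * N - 1) ∧
    (0 : ℝ) ≤ (l : ℝ) * (q - 2 * N - 1) - (2 * N + 1) := by
  have hN' : (1 : ℝ) ≤ N := by exact_mod_cast hN
  have hk' : (1 : ℝ) ≤ k := by exact_mod_cast hk
  have hq' : (q : ℝ) = 2 * N + 2 + 2 * k := by exact_mod_cast hq
  have hpos : (0 : ℝ) < k + 2 := by linarith
  -- The number under the ceiling is exactly `q / (k + 2)`.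
  have hql : (q : ℝ) / (k + 2) ≤ l := by
    have h := Int.le_ceil ((2 * (N : ℝ) - 2) / ((k : ℝ) + 2) + 2)
    rw [← hl] at h
    have e : (q : ℝ) / (k + 2) = (2 * (N : ℝ) - 2) / ((k : ℝ) + 2) + 2 := by
      rw [hq']
      field_simp
      ring
    rwa [e]
  have h1 : (2 * (N : ℝ) + 1) ≤ (q : ℝ) * (2 * k + 1) / (k + 2) := by
    rw [le_div_iff₀ hpos, hq']
    nlinarith [mul_nonneg (sub_nonneg.2 hN') (sub_nonneg.2 hk')]
  -- Since `q - 2 * N - 1 = 2 * k + 1`, multiply `hql` by `2 * k + 1`.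
  have h2 : (q : ℝ) * (2 * k + 1) / (k + 2) ≤ (l : ℝ) * (q - 2 * N - 1) := by
    have e : (q : ℝ) - 2 * N - 1 = 2 * k + 1 := by
      rw [hq']
      ring
    rw [e, mul_div_right_comm]
    exact mul_le_mul_of_nonneg_right hql (by linarith)
  exact ⟨h1, h2, by linarith⟩
end

section
/- Let n, N, q be integers with 1 ≤ n ≤ N and q > 2N−n+1, and let v_1, …, v_q be nonzero vectors in ℂ^{n+1} such that for every subset R ⊆ {1,…,q} with |R| = N+1 the family {v_i : i ∈ R} spans ℂ^{n+1}. Then there exist real numbers ω_1, …, ω_q ∈ (0,1] (Nochka weights) and a real number ω̃ ≥ 1 (Nochka constant) such that: (i) ω_j·ω̃ ≤ 1 for all 1 ≤ j ≤ q; (ii) q−2N+n−1 = ω̃·(∑_{j=1}^q ω_j − n − 1); (iii) for every subset R ⊆ {1,…,q} with |R| = N+1, ∑_{i∈R} ω_i ≤ n+1; (iv) N/n ≤ ω̃ ≤ (2N−n+1)/(n+1); (v) for all real numbers λ_1, …, λ_q with λ_j ≥ 1 for every j and every subset R ⊆ {1,…,q} with |R| = N+1, there exists a subset R¹ ⊆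 R of cardinality n+1 such that the family {v_i : i ∈ R¹} is linearly independent and ∏_{j∈R} λ_j^{ω_j} ≤ ∏_{i∈R¹} λ_i. -/
/-!
Write `d R` for the dimension of the span of `{v i : i ∈ R}`. Everything reduces to a slope
`σ = 1 / ω̃` and weights `0 < ω j ≤ σ` of total mass `n + 1 + σ (q - 2N + n - 1)` with
`∑ i ∈ R, ω i ≤ d R` whenever `|R| ≤ N + 1`: that inequality gives (iii) at once, and (v) by the
matroid greedy argument (`exists_basis_weighted_sum_le`, applied to `log λ`).

The slope `σ` is the maximum of `(n + 1 - d R) / (2N - n + 1 - |R|)` over all `R` with `d R ≤ n`.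
Subgeneral position gives `|R| ≤ N - n + d R` for these sets, hence
`(n + 1) / (2N - n + 1) ≤ σ ≤ n / N`, which is (iv). Let `T` attain the maximum and put
`f R = σ |R| - d R`, a supermodular function. By the choice of `σ`, `f` is at most
`M = σ (2N - n + 1) - (n + 1)` on sets with `d R ≤ n`, with equality at `T`. With `ω = σ - δ`
what is needed is `0 ≤ δ < σ`, total mass `M`, and `δ(R) ≥ f R` for `|R| ≤ N + 1`.

Let `g R` be the maximum of `f` over the subsets of `R ∩ T`. It is again supermodular and
`g univ = M`, so the greedy algorithm (`exists_core_point`) gives `δ` of total mass `M` with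
`δ(R) ≥ g R` for all `R`. This suffices: for `|R| ≤ N + 1`, if `d (R ∪ T) ≤ n` then
supermodularity gives `f R ≤ f (R ∩ T) ≤ g R`, and otherwise `d R + d T ≥ n + 1` forces
`f R ≤ 0 ≤ g R`. The greedy point only satisfies `δ ≤ σ`, but starting the greedy order at `j`
gives `δ j = 0`; averaging over `j` makes every weight positive.
-/

/-! ### The rank function of a family of vectors and the matroid greedy algorithm -/

section Nochka

variable {K V ι : Type*} [Field K] [AddCommGroup V] [Module K V]

/-- The rank of a finite set of indices: the dimension of the span of the corresponding
vectors. -/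
noncomputable def nochkaRank (v : ι → V) (R : Finset ι) : ℕ :=
  Module.finrank K (Submodule.span K (v '' (R : Set ι)))

local notation "rk" => nochkaRank (K := K)

lemma nochkaRank_empty (v : ι → V) : rk v ∅ = 0 := by
  rw [nochkaRank, Finset.coe_empty, Set.image_empty, Submodule.span_empty, finrank_bot]

lemma nochkaRank_singleton (v : ι → V) {j : ι} (hj : v j ≠ 0) : rk v {j} = 1 := by
  rw [nochkaRank, Finset.coe_singleton, Set.image_singleton, finrank_span_singleton hj]

lemma nochkaRank_le_card (v : ι → V) (R : Finset ι) : rk v R ≤ R.card := by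
  classical
  have h := finrank_span_finset_le_card (R := K) (R.image v)
  rw [Finset.coe_image] at h
  exact h.trans Finset.card_image_le

lemma linearIndependent_of_nochkaRank_eq_card (v : ι → V) (R : Finset ι)
    (h : rk v R = R.card) : LinearIndependent K (fun i : {x // x ∈ R} => v i.1) := by
  rw [linearIndependent_iff_card_eq_finrank_span, Set.finrank, Fintype.card_coe, ← h, nochkaRank]
  have h : v '' (R : Set ι) = Set.range fun i : {x // x ∈ R} => v i.1 := by
    ext x
    simp
  rw [h]

variable [FiniteDimensional K V]

lemma nochkaRank_mono (v : ι → V) {R S : Finset ι} (h : R ⊆ S) : rk v R ≤ rk v S :=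
  Submodule.finrank_mono (Submodule.span_mono (Set.image_mono (by exact_mod_cast h)))

variable [DecidableEq ι]

lemma nochkaRank_submodular (v : ι → V) (R S : Finset ι) :
    rk v (R ∪ S) + rk v (R ∩ S) ≤ rk v R + rk v S := by
  unfold nochkaRank
  rw [← Submodule.finrank_sup_add_finrank_inf_eq (Submodule.span K (v '' (R : Set ι))), Finset.coe_union, Set.image_union,
    Submodule.span_union]
  gcongr
  apply Submodule.finrank_mono
  exact le_inf
    (Submodule.span_mono (Set.image_mono (Finset.coe_subset.2 Finset.inter_subset_left)))
    (Submodule.span_mono (Set.image_mono (Finset.coe_subset.2 Finset.inter_subset_right)))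

lemma nochkaRank_union_le (v : ι → V) (R S : Finset ι) :
    rk v (R ∪ S) ≤ rk v R + rk v S :=
  le_trans (Nat.le_add_right _ _) (nochkaRank_submodular v R S)

/-- The matroid greedy algorithm: a weight vector in the independence polytope of `R` is
dominated, for every nonnegative objective `x`, by some basis of `R`. The induction removes an
element `j` minimizing `x` and subtracts the constant `x j` from the objective. -/
lemma exists_basis_weighted_sum_le (v : ι → V) (ω : ι → ℝ) (R : Finset ι)
    (hω : ∀ S ⊆ R, ∑ i ∈ S, ω i ≤ rk v S) (x : ι → ℝ) (hx : ∀ j ∈ R, 0 ≤ x j) :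
    ∃ B ⊆ R, B.card = rk v R ∧ rk v B = B.card ∧ ∑ i ∈ R, ω i * x i ≤ ∑ i ∈ B, x i := by
  induction hk : R.card generalizing R x with
  | zero =>
    rw [Finset.card_eq_zero] at hk
    subst hk
    exact ⟨∅, by simp, by simp [nochkaRank_empty], by simp [nochkaRank_empty], by simp⟩
  | succ k ih =>
    have hne : R.Nonempty := by rw [← Finset.card_pos]; omega
    obtain ⟨j, hj, hmin⟩ := R.exists_min_image x hne
    obtain ⟨B, hBR, hBc, hBi, hB⟩ := ih (R.erase j)
      (fun S hS => hω S (hS.trans (Finset.erase_subset _ _))) (fun i => x i - x j)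
      (fun i hi => sub_nonneg.2 (hmin i (Finset.mem_of_mem_erase hi)))
      (by rw [Finset.card_erase_of_mem hj, hk]; rfl)
    have hBR' : B ⊆ R := hBR.trans (Finset.erase_subset _ _)
    have hjB : j ∉ B := fun h => by simpa using hBR h
    -- the bound holds for any basis of `R` on which the shifted objective has the same sum
    have key : ∀ C : Finset ι, C.card = rk v R → ∑ i ∈ C, (x i - x j) = ∑ i ∈ B, (x i - x j) →
        ∑ i ∈ R, ω i * x i ≤ ∑ i ∈ C, x i := by
      intro C hC hsum
      have h1 : ∑ i ∈ R, ω i * x i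
          = x j * ∑ i ∈ R, ω i + ∑ i ∈ R.erase j, ω i * (x i - x j) := by
        rw [Finset.sum_erase _ (by simp), Finset.mul_sum, ← Finset.sum_add_distrib]
        exact Finset.sum_congr rfl fun i _ => by ring
      have h2 : ∑ i ∈ C, x i = ∑ i ∈ B, (x i - x j) + x j * rk v R := by
        rw [← hsum, ← hC, Finset.sum_sub_distrib]
        simp
        ring
      have h3 := mul_le_mul_of_nonneg_left (hω R subset_rfl) (hx j hj)
      linarith
    have hle : rk v (R.erase j) ≤ rk v R := nochkaRank_mono v (Finset.erase_subset _ _)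
    rcases hle.eq_or_lt with heq | hlt
    · exact ⟨B, hBR', by rw [hBc, heq], hBi, key B (by rw [hBc, heq]) rfl⟩
    · have hu : insert j B ∪ R.erase j = R := by
        ext i
        by_cases hi : i = j
        · simp [hi, hj]
        · simp only [Finset.mem_union, Finset.mem_insert, Finset.mem_erase, hi, false_or, ne_eq,
            not_false_eq_true, true_and]
          exact ⟨fun h => h.elim (fun h => hBR' h) id, Or.inr⟩
      have hi : insert j B ∩ R.erase j = B := by
        rw [Finset.insert_inter_of_notMem (by simp), Finset.inter_eq_left.2 hBR]
      have hs := nochkaRank_submodular (K := K) v (insert j B) (R.erase j)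
      rw [hu, hi] at hs
      have hc := Finset.card_insert_of_notMem hjB
      have hle2 := nochkaRank_le_card (K := K) v (insert j B)
      refine ⟨insert j B, Finset.insert_subset hj hBR', by omega, by omega, key _ (by omega) ?_⟩
      rw [Finset.sum_insert hjB]
      simp

end Nochka

/-! ### Core points of supermodular functions -/

/-- A supermodular set function vanishing at `∅` has a point in its core: the greedy vertex of
an ordering of the ground set that starts with `j`. -/
lemma exists_core_point {ι : Type*} [DecidableEq ι] (g : Finset ι → ℝ)
    (h0 : g ∅ = 0) (hg : ∀ A B, g A + g B ≤ g (A ∪ B) + g (A ∩ B)) (j : ι) (T : Finset ι) :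
    ∃ δ : ι → ℝ, δ j = g {j} ∧ ∑ i ∈ insert j T, δ i = g (insert j T) ∧
      ∀ R ⊆ insert j T, g R ≤ ∑ i ∈ R, δ i := by
  induction T using Finset.induction_on with
  | empty =>
    refine ⟨fun _ => g {j}, rfl, by simp, fun R hR => ?_⟩
    rcases Finset.subset_singleton_iff.1 (show R ⊆ {j} by simpa using hR) with rfl | rfl
    · simp [h0]
    · simp
  | insert a T ha ih =>
    obtain ⟨δ, hδj, hδT, hδ⟩ := ih
    by_cases haj : a = j
    · subst haj
      simpa using ⟨δ, hδj, hδT, hδ⟩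
    rw [Finset.insert_comm]
    set U := insert j T with hU
    have haU : a ∉ U := by simp [hU, haj, ha]
    -- off `a`, the updated function has the same sums
    have hsum : ∀ (c : ℝ) (S : Finset ι), a ∉ S →
        ∑ i ∈ S, Function.update δ a c i = ∑ i ∈ S, δ i := fun c S hS =>
      Finset.sum_congr rfl fun i hi =>
        Function.update_of_ne (show i ≠ a from fun h => hS (h ▸ hi)) _ _
    refine ⟨Function.update δ a (g (insert a U) - g U), ?_, ?_, fun R hR => ?_⟩
    · rw [Function.update_of_ne (Ne.symm haj), hδj]
    · rw [Finset.sum_insert haU, hsum _ _ haU, hδT]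
      simp
    · by_cases haR : a ∈ R
      · have hsub : R.erase a ⊆ U := by
          intro i hi
          rw [Finset.mem_erase] at hi
          exact (Finset.mem_insert.1 (hR hi.2)).resolve_left hi.1
        have hu : R ∪ U = insert a U := by
          rw [← Finset.insert_erase haR, Finset.insert_union, Finset.union_eq_right.2 hsub]
        have hi : R ∩ U = R.erase a := by
          conv_lhs => rw [← Finset.insert_erase haR]
          rw [Finset.insert_inter_of_notMem haU, Finset.inter_eq_left.2 hsub]
        have h1 := hg R U
        rw [hu, hi] at h1
        have h2 := hδ _ hsub
        rw [← Finset.add_sum_erase _ _ haR, hsum _ _ (Finset.notMem_erase _ _)]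
        simp only [Function.update_self]
        linarith
      · rw [hsum _ _ haR]
        exact hδ R fun i hi => (Finset.mem_insert.1 (hR hi)).resolve_left
          fun h => haR (h ▸ hi)

/-- Deficiencies for a supermodular function `f` with `f ∅ = 0`: if `f` is nonpositive on
singletons and removing an element lowers `f` by at most `σ > 0`, then some `0 ≤ δ < σ` has
total mass `f T` and dominates `f` on the subsets of a set `T` at which `f` is maximal among
its subsets. -/
lemma exists_deficiency {ι : Type*} [Fintype ι] [DecidableEq ι] (f : Finset ι → ℝ) (σ : ℝ)
    (hσ : 0 < σ) (h0 : f ∅ = 0) (hf : ∀ A B, f A + f B ≤ f (A ∪ B) + f (A ∩ B))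
    (h1 : ∀ j, f {j} ≤ 0) (hL : ∀ A j, f A ≤ f (A.erase j) + σ)
    (T : Finset ι) (hT : ∀ S ⊆ T, f S ≤ f T) :
    ∃ δ : ι → ℝ, (∀ j, 0 ≤ δ j ∧ δ j < σ) ∧ ∑ j, δ j = f T ∧
      ∀ R S, S ⊆ R → S ⊆ T → f S ≤ ∑ i ∈ R, δ i := by
  -- the monotone closure of `f` restricted to `T`
  let g : Finset ι → ℝ := fun R => (R ∩ T).powerset.sup' (Finset.powerset_nonempty _) f
  have hle : ∀ R S, S ⊆ R → S ⊆ T → f S ≤ g R := fun R S hR hS =>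
    Finset.le_sup' f (Finset.mem_powerset.2 (Finset.subset_inter hR hS))
  have hex : ∀ R, ∃ S, S ⊆ R ∧ S ⊆ T ∧ g R = f S := by
    intro R
    obtain ⟨S, hS, h⟩ := Finset.exists_mem_eq_sup' (s := (R ∩ T).powerset) (Finset.powerset_nonempty _) f
    rw [Finset.mem_powerset, Finset.subset_inter_iff] at hS
    exact ⟨S, hS.1, hS.2, h⟩
  have hg0 : g ∅ = 0 := by
    obtain ⟨S, hS, -, h⟩ := hex ∅
    rw [h, Finset.subset_empty.1 hS, h0]
  have hgnn : ∀ R, 0 ≤ g R := fun R => h0 ▸ hle R ∅ (by simp) (by simp)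
  have hg1 : ∀ j, g {j} = 0 := by
    intro j
    refine le_antisymm ?_ (hgnn _)
    obtain ⟨S, hS, -, h⟩ := hex {j}
    rcases Finset.subset_singleton_iff.1 hS with rfl | rfl
    · rw [h, h0]
    · rw [h]
      exact h1 j
  have hgs : ∀ A B, g A + g B ≤ g (A ∪ B) + g (A ∩ B) := by
    intro A B
    obtain ⟨S, hSA, hST, hS⟩ := hex A
    obtain ⟨S', hSB, hST', hS'⟩ := hex B
    rw [hS, hS']
    refine (hf S S').trans (add_le_add ?_ ?_)
    · exact hle _ _ (Finset.union_subset_union hSA hSB) (Finset.union_subset hST hST')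
    · exact hle _ _ (Finset.inter_subset_inter hSA hSB) (Finset.inter_subset_left.trans hST)
  have hgu : g Finset.univ = f T := by
    refine le_antisymm ?_ (hle _ _ (Finset.subset_univ _) subset_rfl)
    obtain ⟨S, -, hST, h⟩ := hex Finset.univ
    rw [h]
    exact hT S hST
  have hgL : ∀ j, g Finset.univ ≤ g (Finset.univ.erase j) + σ := by
    intro j
    obtain ⟨S, -, hST, h⟩ := hex Finset.univ
    rw [h]
    refine (hL S j).trans (add_le_add_left ?_ _)
    exact hle _ _ (Finset.erase_subset_erase _ (Finset.subset_univ _))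
      ((Finset.erase_subset _ _).trans hST)
  have hcore : ∀ j, ∃ δ : ι → ℝ, δ j = 0 ∧ ∑ i, δ i = f T ∧ (∀ R, g R ≤ ∑ i ∈ R, δ i) ∧
      ∀ i, 0 ≤ δ i ∧ δ i ≤ σ := by
    intro j
    obtain ⟨δ, hj, hs, hR⟩ := exists_core_point g hg0 hgs j Finset.univ
    simp only [Finset.subset_univ, Finset.insert_eq_of_mem, Finset.mem_univ, forall_const]
      at hs hR
    refine ⟨δ, by rw [hj, hg1], by rw [hs, hgu], hR, fun i => ⟨?_, ?_⟩⟩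
    · have := hR {i}
      rw [hg1] at this
      simpa using this
    · have h2 := hR (Finset.univ.erase i)
      have h3 := Finset.add_sum_erase Finset.univ δ (Finset.mem_univ i)
      have h4 := hgL i
      linarith
  rcases isEmpty_or_nonempty ι with hι | hι
  · refine ⟨fun _ => 0, fun j => hι.elim j, ?_, fun R S _ _ => ?_⟩
    · simp [Finset.eq_empty_of_isEmpty T, h0]
    · simp [Finset.eq_empty_of_isEmpty S, h0]
  choose D hDj hDs hDR hD using hcore
  have hc : (0 : ℝ) < Fintype.card ι := by exact_mod_cast Fintype.card_pos
  refine ⟨fun i => (∑ j, D j i) / Fintype.card ι, fun i => ⟨?_, ?_⟩, ?_, fun R S hSR hST => ?_⟩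
  · exact div_nonneg (Finset.sum_nonneg fun j _ => (hD j i).1) hc.le
  · rw [div_lt_iff₀ hc]
    calc ∑ j, D j i < ∑ _j : ι, σ :=
          Finset.sum_lt_sum (fun j _ => (hD j i).2) ⟨i, Finset.mem_univ i, by rw [hDj]; exact hσ⟩
      _ = σ * Fintype.card ι := by simp [mul_comm]
  · rw [← Finset.sum_div, Finset.sum_comm, div_eq_iff hc.ne']
    simp [hDs, mul_comm]
  · rw [← Finset.sum_div, Finset.sum_comm, le_div_iff₀ hc]
    calc f S * Fintype.card ι = ∑ _j : ι, f S := by simp [mul_comm]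
      _ ≤ _ := Finset.sum_le_sum fun j _ => (hle R S hSR hST).trans (hDR j R)

/-! ### The Nochka slope and weights -/

/-- The slope `σ` and weights `ω` behind the Nochka theorem, with `ω` in the independence
polytope as far as sets of at most `N + 1` indices are concerned. -/
lemma exists_nochka_slope_weights (n N q : ℕ) (hn : 1 ≤ n) (hnN : n ≤ N)
    (hq : 2 * N + 1 < q + n) (v : Fin q → (Fin (n + 1) → ℂ)) (hv : ∀ i, v i ≠ 0)
    (hpos : ∀ R : Finset (Fin q), R.card = N + 1 →
      Submodule.span ℂ (v '' (R : Set (Fin q))) = ⊤) :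
    ∃ (ω : Fin q → ℝ) (σ : ℝ), (∀ j, 0 < ω j ∧ ω j ≤ σ) ∧
      ((n : ℝ) + 1) / (2 * N - n + 1) ≤ σ ∧ σ ≤ (n : ℝ) / N ∧
      ∑ j, ω j = n + 1 + σ * (q - 2 * N + n - 1) ∧
      ∀ R : Finset (Fin q), R.card ≤ N + 1 → ∑ i ∈ R, ω i ≤ nochkaRank (K := ℂ) v R := by
  set d : Finset (Fin q) → ℕ := nochkaRank (K := ℂ) v with hd
  have hfull : ∀ R : Finset (Fin q), R.card = N + 1 → d R = n + 1 := by
    intro R hR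
    rw [hd, nochkaRank, hpos R hR, finrank_top, Module.finrank_fin_fun]
  have hdle : ∀ R, d R ≤ n + 1 := by
    intro R
    simpa [hd, nochkaRank] using Submodule.finrank_le (Submodule.span ℂ (v '' (R : Set (Fin q))))
  have hcard : ∀ R : Finset (Fin q), R.card ≤ N + 1 → R.card + n ≤ N + d R := by
    intro R hR
    obtain ⟨R', hRR', hR'⟩ := Finset.exists_superset_card_eq (s := R) (n := N + 1) hR
      (by simp; omega)
    have h1 := nochkaRank_union_le (K := ℂ) v R (R' \ R)
    rw [Finset.union_sdiff_of_subset hRR'] at h1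
    have h2 := nochkaRank_le_card (K := ℂ) v (R' \ R)
    rw [Finset.card_sdiff_of_subset hRR'] at h2
    have h3 := hfull R' hR'
    simp only [hd] at h3 ⊢
    omega
  have hsmall : ∀ R : Finset (Fin q), d R ≤ n → R.card ≤ N := by
    intro R hR
    by_contra! h
    obtain ⟨S, hSR, hS⟩ := Finset.exists_subset_card_eq (s := R) (n := N + 1) h
    have h1 := hfull S hS
    have h2 : d S ≤ d R := nochkaRank_mono v hSR
    omega
  -- the same facts over the reals
  have hnN' : (n : ℝ) ≤ N := by exact_mod_cast hnN
  have hn' : (1 : ℝ) ≤ n := by exact_mod_cast hn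
  have hcardR : ∀ R : Finset (Fin q), R.card ≤ N + 1 → (R.card : ℝ) + n ≤ N + d R :=
    fun R hR => by exact_mod_cast hcard R hR
  have hden : ∀ R : Finset (Fin q), d R ≤ n → (0 : ℝ) < 2 * N - n + 1 - R.card := by
    intro R hR
    have : (R.card : ℝ) ≤ N := by exact_mod_cast hsmall R hR
    linarith
  have hd0 : d ∅ = 0 := nochkaRank_empty v
  obtain ⟨T, hTm, hTmax⟩ := (Finset.univ.filter fun R : Finset (Fin q) => d R ≤ n).exists_max_image
    (fun R => ((n : ℝ) + 1 - d R) / (2 * N - n + 1 - R.card)) ⟨∅, by simp [hd0]⟩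
  simp only [Finset.mem_filter, Finset.mem_univ, true_and] at hTm hTmax
  set σ : ℝ := ((n : ℝ) + 1 - d T) / (2 * N - n + 1 - T.card) with hσ
  have hσlow : ((n : ℝ) + 1) / (2 * N - n + 1) ≤ σ := by
    simpa [hd0] using hTmax ∅ (by simp [hd0])
  have hσpos : 0 < σ := lt_of_lt_of_le (div_pos (by linarith) (by linarith)) hσlow
  have hTn : (d T : ℝ) ≤ n := by exact_mod_cast hTm
  have hTeq : σ * (2 * N - n + 1 - T.card) = n + 1 - d T := by
    rw [hσ, div_mul_cancel₀ _ (hden T hTm).ne']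
  have hTc : (T.card : ℝ) + n ≤ N + d T := hcardR T ((hsmall T hTm).trans (Nat.le_succ N))
  have hσup : σ ≤ (n : ℝ) / N := by
    rw [hσ, div_le_div_iff₀ (hden T hTm) (by linarith)]
    rcases T.eq_empty_or_nonempty with rfl | ⟨j, hj⟩
    · simp only [hd0, Finset.card_empty, Nat.cast_zero]
      nlinarith [mul_nonneg (sub_nonneg.2 hnN') (sub_nonneg.2 hn')]
    · have h1 : 1 ≤ d T := by
        rw [← nochkaRank_singleton (K := ℂ) v (hv j)]
        exact nochkaRank_mono v (by simpa using hj)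
      have h1' : (1 : ℝ) ≤ d T := by exact_mod_cast h1
      nlinarith [mul_nonneg (sub_nonneg.2 hnN') (sub_nonneg.2 h1'),
        mul_nonneg (sub_nonneg.2 hTc) (by linarith : (0 : ℝ) ≤ n)]
  have hσ1 : σ ≤ 1 := hσup.trans (div_le_one_of_le₀ hnN' (by linarith))
  let f : Finset (Fin q) → ℝ := fun R => σ * R.card - d R
  have hfM : ∀ R, d R ≤ n → f R ≤ f T := by
    intro R hR
    have := hTmax R hR
    rw [div_le_iff₀ (hden R hR)] at this
    simp only [f]
    linarith
  have hfs : ∀ A B, f A + f B ≤ f (A ∪ B) + f (A ∩ B) := by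
    intro A B
    have h1 : (d (A ∪ B) : ℝ) + d (A ∩ B) ≤ d A + d B := by
      exact_mod_cast nochkaRank_submodular (K := ℂ) v A B
    have h2 : ((A ∪ B).card : ℝ) + (A ∩ B).card = A.card + B.card := by
      exact_mod_cast Finset.card_union_add_card_inter A B
    have h3 : σ * (A ∪ B).card + σ * (A ∩ B).card = σ * A.card + σ * B.card := by
      rw [← mul_add, ← mul_add, h2]
    simp only [f]
    linarith
  obtain ⟨δ, hδ, hδs, hδR⟩ := exists_deficiency f σ hσpos (by simp [f, hd0]) hfs
    (fun j => by
      have : d {j} = 1 := nochkaRank_singleton v (hv j)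
      simp only [f, this, Finset.card_singleton, Nat.cast_one]
      linarith)
    (fun A j => by
      have h1 : (d (A.erase j) : ℝ) ≤ d A := by
        exact_mod_cast nochkaRank_mono (K := ℂ) v (Finset.erase_subset j A)
      have h2 : (A.card : ℝ) ≤ (A.erase j).card + 1 := by
        have := Finset.pred_card_le_card_erase (a := j) (s := A)
        exact_mod_cast (by omega : A.card ≤ (A.erase j).card + 1)
      have h3 := mul_le_mul_of_nonneg_left h2 hσpos.le
      simp only [f]
      linarith)
    T (fun S hS => hfM S ((nochkaRank_mono (K := ℂ) v hS).trans hTm))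
  refine ⟨fun j => σ - δ j, σ, fun j => ⟨sub_pos.2 (hδ j).2, sub_le_self _ (hδ j).1⟩,
    hσlow, hσup, ?_, fun R hR => ?_⟩
  · rw [Finset.sum_sub_distrib, hδs]
    simp only [f, Finset.sum_const, Finset.card_univ, Fintype.card_fin, nsmul_eq_mul]
    linarith
  · suffices h : f R ≤ ∑ i ∈ R, δ i by
      simp only [f] at h
      rw [Finset.sum_sub_distrib]
      simp only [Finset.sum_const, nsmul_eq_mul]
      linarith
    by_cases hRT : d (R ∪ T) ≤ n
    · have h1 := hfs R T
      have h2 := hfM _ hRT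
      have h3 := hδR R (R ∩ T) Finset.inter_subset_left Finset.inter_subset_right
      linarith
    · -- here `f R ≤ 0`, because `σ ≤ a / (N - n + a)` with `a = n + 1 - d T ≤ d R`
      have h0 := hδR R ∅ (by simp) (by simp)
      simp only [f, Finset.card_empty, hd0, Nat.cast_zero, mul_zero, sub_zero] at h0
      refine le_trans ?_ h0
      have h1 : (n : ℝ) + 1 ≤ d R + d T := by
        have : d (R ∪ T) ≤ d R + d T := nochkaRank_union_le v R T
        exact_mod_cast (by omega : n + 1 ≤ d R + d T)
      have h2 := hcardR R hR
      have h3 : σ * (N + 1 - d T) ≤ n + 1 - d T := by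
        rw [← hTeq]
        exact mul_le_mul_of_nonneg_left (by linarith) hσpos.le
      have h4 : σ * R.card ≤ σ * (N - n + d R) :=
        mul_le_mul_of_nonneg_left (by linarith) hσpos.le
      have h5 : 0 ≤ (1 - σ) * (d R + d T - (n + 1)) :=
        mul_nonneg (by linarith) (by linarith)
      simp only [f]
      linarith

/-- Proposition 2.2 of the paper (the Nochka weight theorem), stated in terms of the
nonzero coefficient vectors v_1, …, v_q ∈ ℂ^{n+1} of hyperplanes of ℙ^n(ℂ) in
N-subgeneral position: every N+1 of the vectors span ℂ^{n+1}. -/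
theorem stmt_18 (n N q : ℕ) (hn : 1 ≤ n) (hnN : n ≤ N) (hq : 2 * N + 1 < q + n)
    (v : Fin q → (Fin (n + 1) → ℂ)) (hv : ∀ i, v i ≠ 0)
    (hpos : ∀ R : Finset (Fin q), R.card = N + 1 →
      Submodule.span ℂ (v '' (R : Set (Fin q))) = ⊤) :
    ∃ (ω : Fin q → ℝ) (ωt : ℝ),
      (∀ j, 0 < ω j ∧ ω j ≤ 1) ∧ 1 ≤ ωt ∧
      -- (i)
      (∀ j, ω j * ωt ≤ 1) ∧
      -- (ii)
      ((q : ℝ) - 2 * N + n - 1 = ωt * ((∑ j, ω j) - n - 1)) ∧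
      -- (iii)
      (∀ R : Finset (Fin q), R.card = N + 1 → ∑ i ∈ R, ω i ≤ (n : ℝ) + 1) ∧
      -- (iv)
      ((N : ℝ) / n ≤ ωt ∧ ωt ≤ (2 * (N : ℝ) - n + 1) / (n + 1)) ∧
      -- (v)
      (∀ lam : Fin q → ℝ, (∀ j, 1 ≤ lam j) →
        ∀ R : Finset (Fin q), R.card = N + 1 →
          ∃ R1 : Finset (Fin q), R1 ⊆ R ∧ R1.card = n + 1 ∧
            LinearIndependent ℂ (fun i : {x // x ∈ R1} => v i.1) ∧
            ∏ j ∈ R, (lam j) ^ (ω j) ≤ ∏ i ∈ R1, lam i) := by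
  obtain ⟨ω, σ, hω, hlow, hup, hsum, hR⟩ := exists_nochka_slope_weights n N q hn hnN hq v hv hpos
  have hnN' : (n : ℝ) ≤ N := by exact_mod_cast hnN
  have hn' : (1 : ℝ) ≤ n := by exact_mod_cast hn
  have hlow0 : 0 < ((n : ℝ) + 1) / (2 * N - n + 1) := div_pos (by linarith) (by linarith)
  have hσpos : 0 < σ := hlow0.trans_le hlow
  have hσ1 : σ ≤ 1 := hup.trans (div_le_one_of_le₀ hnN' (by linarith))
  have hfull : ∀ R : Finset (Fin q), R.card = N + 1 → nochkaRank (K := ℂ) v R = n + 1 := by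
    intro R hR
    rw [nochkaRank, hpos R hR, finrank_top, Module.finrank_fin_fun]
  refine ⟨ω, σ⁻¹, fun j => ⟨(hω j).1, (hω j).2.trans hσ1⟩, (one_le_inv₀ hσpos).2 hσ1,
    fun j => ?_, ?_, fun R hRc => ?_, ⟨?_, ?_⟩, fun lam hlam R hRc => ?_⟩
  · rw [← div_eq_mul_inv, div_le_one hσpos]
    exact (hω j).2
  · rw [hsum]
    field_simp
    ring
  · have := hR R hRc.le
    rw [hfull R hRc] at this
    exact_mod_cast this
  · rw [← inv_div]
    exact inv_anti₀ hσpos hup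
  · rw [← inv_div ((n : ℝ) + 1)]
    exact inv_anti₀ hlow0 hlow
  · have hlam0 : ∀ j, 0 < lam j := fun j => one_pos.trans_le (hlam j)
    obtain ⟨B, hBR, hBc, hBi, hB⟩ := exists_basis_weighted_sum_le (K := ℂ) v ω R
      (fun S hS => hR S ((Finset.card_le_card hS).trans hRc.le)) (fun j => Real.log (lam j))
      (fun j _ => Real.log_nonneg (hlam j))
    refine ⟨B, hBR, by rw [hBc, hfull R hRc], linearIndependent_of_nochkaRank_eq_card v B hBi, ?_⟩
    rw [← Real.log_le_log_iff (Finset.prod_pos fun j _ => Real.rpow_pos_of_pos (hlam0 j) _)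
      (Finset.prod_pos fun j _ => hlam0 j),
      Real.log_prod fun j _ => (Real.rpow_pos_of_pos (hlam0 j) _).ne',
      Real.log_prod fun j _ => (hlam0 j).ne']
    simpa only [Real.log_rpow (hlam0 _)] using hB
end
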